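/- arXiv:2109.01899 — 4 statements merged into one kernel-verified Lean document; each statement's English description precedes it below -/
import Mathlib

section
/- Positivity of the energy–momentum tensor (Lemma `emtensorpositivity`, Minkowski case): let X, N ∈ ℝ⁴ be timelike and future-directed, i.e. η(X,X) < 0, η(N,N) < 0, X₀ > 0 and N₀ > 0. Then there exists a constant d₀ > 0 (depending on X and N) such that for every Z ∈ ℝ⁴ one has 2·η(Z,X)·η(Z,N) − η(X,N)·η(Z,Z) ≥ d₀·‖Z‖², where ‖Z‖ is the Euclidean norm of Z. -/
noncomputable section

/-- The Minkowski inner product on `ℝ⁴`: `η(X,Y) = -X₀Y₀ + X₁Y₁ + X₂Y₂ + X₃Y₃`. -/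
def eta (X Y : Fin 4 → ℝ) : ℝ :=
  -(X 0 * Y 0) + X 1 * Y 1 + X 2 * Y 2 + X 3 * Y 3

/-!
Contracting the energy–momentum tensor of `Z` with `X` alone gives the energy flux
`F = η(Z,Z) X - 2 η(Z,X) Z`, and `Q[Z](X,N) = -η(F,N)`. If `η(Z,Z) ≠ 0`, then `F` is `η(Z,Z)` times
the reflection of `X` in the hyperplane orthogonal to `Z`. In all cases
`η(F,F) = η(Z,Z)² η(X,X) ≤ 0`, and the time component of `F` is at least `(X₀ - |x|) ‖Z‖²`, where
`x` is the spatial part of `X`. So `F` is causal and future-directed (the dominant energy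
condition), and Cauchy–Schwarz bounds `-η(F,N)` below by `F₀ (N₀ - |n|)`.
-/

open scoped RealInnerProductSpace

section BilinForm

variable {R M : Type*} [CommRing R] [AddCommGroup M] [Module R M]

/-- The energy–momentum tensor `Q[Z](X,N) = 2 B(Z,X) B(Z,N) - B(X,N) B(Z,Z)` of a vector `Z`, with
an arbitrary bilinear form `B` in the role of the metric. -/
def emTensor (B : LinearMap.BilinForm R M) (Z X N : M) : R :=
  2 * B Z X * B Z N - B X N * B Z Z

/-- The energy flux of `Z` seen by the observer `X`: the vector `-Q[Z](X,·)` with its index raised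
by `B`. For the Minkowski metric, the sign makes it future-directed when `X` is. -/
def energyFlux (B : LinearMap.BilinForm R M) (Z X : M) : M :=
  B Z Z • X - (2 * B Z X) • Z

lemma emTensor_eq_neg_energyFlux (B : LinearMap.BilinForm R M) (Z X N : M) :
    emTensor B Z X N = -B (energyFlux B Z X) N := by
  simp only [emTensor, energyFlux, map_sub, map_smul, LinearMap.sub_apply, LinearMap.smul_apply,
    smul_eq_mul]
  ring

lemma energyFlux_apply_self {B : LinearMap.BilinForm R M} (hB : B.IsSymm) (Z X : M) :
    B (energyFlux B Z X) (energyFlux B Z X) = B Z Z ^ 2 * B X X := by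
  simp only [energyFlux, map_sub, map_smul, LinearMap.sub_apply, LinearMap.smul_apply,
    smul_eq_mul, hB.eq X Z]
  ring

end BilinForm

/-- Minkowski space with time axis `ℝ` and space `E`. Its norm is the Euclidean one,
`‖X‖² = X₀² + |x|²`, not the sup norm of `ℝ × E`. -/
abbrev MinkowskiSpace (E : Type*) : Type _ := WithLp 2 (ℝ × E)

lemma norm_sq_eq_fst_sq_add_norm_snd_sq {E : Type*} [NormedAddCommGroup E]
    (Z : MinkowskiSpace E) :
    ‖Z‖ ^ 2 = Z.fst ^ 2 + ‖Z.snd‖ ^ 2 := by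
  rw [WithLp.prod_norm_sq_eq_of_L2, Real.norm_eq_abs, sq_abs]

section Minkowski

variable {E : Type*} [NormedAddCommGroup E] [InnerProductSpace ℝ E]

variable (E) in
/-- The Minkowski inner product `η(X,Y) = ⟪x, y⟫ - X₀Y₀`, of signature `(-,+,…,+)`. -/
def minkowskiForm : LinearMap.BilinForm ℝ (MinkowskiSpace E) :=
  (innerₗ E).compl₁₂ (WithLp.sndₗ 2 ℝ ℝ E) (WithLp.sndₗ 2 ℝ ℝ E) -
    (LinearMap.mul ℝ ℝ).compl₁₂ (WithLp.fstₗ 2 ℝ ℝ E) (WithLp.fstₗ 2 ℝ ℝ E)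

lemma minkowskiForm_apply (X Y : MinkowskiSpace E) :
    minkowskiForm E X Y = ⟪X.snd, Y.snd⟫ - X.fst * Y.fst := rfl

lemma minkowskiForm_self (X : MinkowskiSpace E) :
    minkowskiForm E X X = ‖X.snd‖ ^ 2 - X.fst ^ 2 := by
  rw [minkowskiForm_apply, real_inner_self_eq_norm_sq, sq X.fst]

lemma minkowskiForm_isSymm : (minkowskiForm E).IsSymm where
  eq X Y := by
    rw [minkowskiForm_apply, minkowskiForm_apply, real_inner_comm, mul_comm]

lemma minkowskiForm_self_nonpos_iff {X : MinkowskiSpace E} (hX₀ : 0 ≤ X.fst) :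
    minkowskiForm E X X ≤ 0 ↔ ‖X.snd‖ ≤ X.fst := by
  rw [minkowskiForm_self, sub_nonpos, sq_le_sq₀ (norm_nonneg _) hX₀]

lemma minkowskiForm_self_neg_iff {X : MinkowskiSpace E} (hX₀ : 0 ≤ X.fst) :
    minkowskiForm E X X < 0 ↔ ‖X.snd‖ < X.fst := by
  rw [minkowskiForm_self, sub_neg, sq_lt_sq₀ (norm_nonneg _) hX₀]

lemma fst_mul_le_neg_minkowskiForm {P : MinkowskiSpace E} (hP : ‖P.snd‖ ≤ P.fst)
    (N : MinkowskiSpace E) : P.fst * (N.fst - ‖N.snd‖) ≤ -minkowskiForm E P N := by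
  have cauchy_schwarz : ⟪P.snd, N.snd⟫ ≤ P.fst * ‖N.snd‖ :=
    (real_inner_le_norm _ _).trans (by gcongr)
  rw [minkowskiForm_apply]
  linarith

lemma energyFlux_minkowskiForm_fst (Z X : MinkowskiSpace E) :
    (energyFlux (minkowskiForm E) Z X).fst =
      X.fst * ‖Z‖ ^ 2 - 2 * (Z.fst * ⟪Z.snd, X.snd⟫) := by
  rw [energyFlux, WithLp.sub_fst, WithLp.smul_fst, WithLp.smul_fst, minkowskiForm_self,
    minkowskiForm_apply, norm_sq_eq_fst_sq_add_norm_snd_sq, smul_eq_mul, smul_eq_mul]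
  ring

lemma two_mul_fst_mul_inner_snd_le (Z : MinkowskiSpace E) (x : E) :
    2 * (Z.fst * ⟪Z.snd, x⟫) ≤ ‖x‖ * ‖Z‖ ^ 2 :=
  calc 2 * (Z.fst * ⟪Z.snd, x⟫)
      ≤ 2 * (|Z.fst| * |⟪Z.snd, x⟫|) := by
        rw [← abs_mul]
        gcongr
        exact le_abs_self _
    _ ≤ 2 * (|Z.fst| * (‖Z.snd‖ * ‖x‖)) := by
        gcongr
        exact abs_real_inner_le_norm _ _
    _ = ‖x‖ * (2 * |Z.fst| * ‖Z.snd‖) := by ring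
    _ ≤ ‖x‖ * (|Z.fst| ^ 2 + ‖Z.snd‖ ^ 2) := by
        gcongr
        exact two_mul_le_add_sq _ _
    _ = ‖x‖ * ‖Z‖ ^ 2 := by rw [sq_abs, norm_sq_eq_fst_sq_add_norm_snd_sq]

lemma mul_norm_sq_le_energyFlux_fst (Z X : MinkowskiSpace E) :
    (X.fst - ‖X.snd‖) * ‖Z‖ ^ 2 ≤ (energyFlux (minkowskiForm E) Z X).fst := by
  rw [energyFlux_minkowskiForm_fst, sub_mul]
  exact sub_le_sub_left (two_mul_fst_mul_inner_snd_le Z X.snd) _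

lemma norm_energyFlux_snd_le_fst {X : MinkowskiSpace E} (hX : ‖X.snd‖ ≤ X.fst)
    (Z : MinkowskiSpace E) :
    ‖(energyFlux (minkowskiForm E) Z X).snd‖ ≤ (energyFlux (minkowskiForm E) Z X).fst := by
  have hX_causal : minkowskiForm E X X ≤ 0 :=
    (minkowskiForm_self_nonpos_iff ((norm_nonneg _).trans hX)).mpr hX
  have flux_fst_nonneg : 0 ≤ (energyFlux (minkowskiForm E) Z X).fst :=
    (mul_nonneg (sub_nonneg.mpr hX) (sq_nonneg _)).trans (mul_norm_sq_le_energyFlux_fst Z X)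
  rw [← minkowskiForm_self_nonpos_iff flux_fst_nonneg, energyFlux_apply_self minkowskiForm_isSymm]
  exact mul_nonpos_of_nonneg_of_nonpos (sq_nonneg _) hX_causal

lemma mul_norm_sq_le_emTensor {X N : MinkowskiSpace E} (hX : ‖X.snd‖ ≤ X.fst)
    (hN : ‖N.snd‖ ≤ N.fst) (Z : MinkowskiSpace E) :
    (X.fst - ‖X.snd‖) * (N.fst - ‖N.snd‖) * ‖Z‖ ^ 2 ≤ emTensor (minkowskiForm E) Z X N :=
  calc (X.fst - ‖X.snd‖) * (N.fst - ‖N.snd‖) * ‖Z‖ ^ 2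
      = (X.fst - ‖X.snd‖) * ‖Z‖ ^ 2 * (N.fst - ‖N.snd‖) := mul_right_comm _ _ _
    _ ≤ (energyFlux (minkowskiForm E) Z X).fst * (N.fst - ‖N.snd‖) :=
        mul_le_mul_of_nonneg_right (mul_norm_sq_le_energyFlux_fst Z X) (sub_nonneg.mpr hN)
    _ ≤ -minkowskiForm E (energyFlux (minkowskiForm E) Z X) N :=
        fst_mul_le_neg_minkowskiForm (norm_energyFlux_snd_le_fst hX Z) N
    _ = emTensor (minkowskiForm E) Z X N := (emTensor_eq_neg_energyFlux _ _ _ _).symm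

theorem emtensor_positivity_general {X N : MinkowskiSpace E}
    (hX : minkowskiForm E X X < 0) (hN : minkowskiForm E N N < 0)
    (hX₀ : 0 < X.fst) (hN₀ : 0 < N.fst) :
    ∃ d₀ > (0 : ℝ), ∀ Z : MinkowskiSpace E,
      d₀ * ‖Z‖ ^ 2 ≤ emTensor (minkowskiForm E) Z X N := by
  have hXlt : ‖X.snd‖ < X.fst := (minkowskiForm_self_neg_iff hX₀.le).mp hX
  have hNlt : ‖N.snd‖ < N.fst := (minkowskiForm_self_neg_iff hN₀.le).mp hN
  exact ⟨(X.fst - ‖X.snd‖) * (N.fst - ‖N.snd‖),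
    mul_pos (sub_pos.mpr hXlt) (sub_pos.mpr hNlt), mul_norm_sq_le_emTensor hXlt.le hNlt.le⟩

end Minkowski

/-- The splitting of `ℝ⁴` into its time axis, coordinate `0`, and Euclidean space. -/
def splitTime (X : Fin 4 → ℝ) : MinkowskiSpace (EuclideanSpace ℝ (Fin 3)) :=
  WithLp.toLp 2 (X 0, WithLp.toLp 2 (Fin.tail X))

lemma minkowskiForm_splitTime (X Y : Fin 4 → ℝ) :
    minkowskiForm _ (splitTime X) (splitTime Y) = eta X Y := by
  simp only [minkowskiForm_apply, splitTime, eta, WithLp.toLp_fst, WithLp.toLp_snd,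
    PiLp.inner_apply, RCLike.inner_apply, Real.ringHom_apply, Fin.sum_univ_three, Fin.tail,
    Fin.succ_zero_eq_one, Fin.succ_one_eq_two, Fin.reduceSucc]
  ring

lemma norm_splitTime_sq (Z : Fin 4 → ℝ) :
    ‖splitTime Z‖ ^ 2 = Z 0 ^ 2 + Z 1 ^ 2 + Z 2 ^ 2 + Z 3 ^ 2 := by
  simp only [norm_sq_eq_fst_sq_add_norm_snd_sq, splitTime, WithLp.toLp_fst, WithLp.toLp_snd,
    EuclideanSpace.real_norm_sq_eq, Fin.sum_univ_three, Fin.tail, Fin.succ_zero_eq_one,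
    Fin.succ_one_eq_two, Fin.reduceSucc]
  ring

lemma emTensor_splitTime (Z X N : Fin 4 → ℝ) :
    emTensor (minkowskiForm _) (splitTime Z) (splitTime X) (splitTime N) =
      2 * eta Z X * eta Z N - eta X N * eta Z Z := by
  simp only [emTensor, minkowskiForm_splitTime]

/-- Positivity of the energy–momentum tensor (Lemma `emtensorpositivity`, Minkowski case). -/
theorem emtensor_positivity (X N : Fin 4 → ℝ)
    (hX : eta X X < 0) (hN : eta N N < 0)
    (hX0 : 0 < X 0) (hN0 : 0 < N 0) :
    ∃ d₀ > (0 : ℝ), ∀ Z : Fin 4 → ℝ,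
      2 * eta Z X * eta Z N - eta X N * eta Z Z ≥
        d₀ * ((Z 0) ^ 2 + (Z 1) ^ 2 + (Z 2) ^ 2 + (Z 3) ^ 2) := by
  rw [← minkowskiForm_splitTime] at hX hN
  obtain ⟨d₀, hd₀, hbound⟩ := emtensor_positivity_general hX hN hX0 hN0
  exact ⟨d₀, hd₀, fun Z => by
    simpa only [norm_splitTime_sq, emTensor_splitTime] using hbound (splitTime Z)⟩
end
end

section
/- Pointwise div–curl–tangential estimate for matrices (the algebraic core of Lemma `app:pwdiff` and Lemma `pwHlemma`): there exists a universal constant C > 0 such that for every real 3×3 matrix M and every unit vector n ∈ ℝ³, writing P = I − n nᵀ for the orthogonal projection onto the plane orthogonal to n, one has ‖M‖_F ≤ C·( |tr M| + ‖M − Mᵀ‖_F + ‖P·M‖_F ), where ‖·‖_F denotes the Frobenius norm and P·M is the matrix product. -/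
noncomputable section

open Matrix

/-- The Frobenius norm of a real 3×3 matrix. -/
def frob (M : Matrix (Fin 3) (Fin 3) ℝ) : ℝ :=
  Real.sqrt (∑ i, ∑ j, (M i j) ^ 2)

/-!
Put `N = n nᴴ`. Then `M = (1 - N) M + N M`, and `N M` differs from `(M N)ᴴ` by `N (M - Mᴴ)`, so it
remains to bound `M N = (1 - N) M N + N M N`. The last term is the double normal component
`tr (N M) N`, which is recovered from the trace: `tr (N M) = tr M - tr ((1 - N) M)`.
-/

open scoped Matrix.Norms.Frobenius

lemma frob_eq_frobenius_norm (M : Matrix (Fin 3) (Fin 3) ℝ) : frob M = ‖M‖ := by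
  simp [frob, frobenius_norm_def, Real.sqrt_eq_rpow]

lemma vecMulVec_mul_mul_vecMulVec {R ι κ : Type*} [CommSemiring R] [Fintype ι] [Fintype κ]
    (u : ι → R) (v : κ → R) (M : Matrix κ ι R) :
    vecMulVec u v * M * vecMulVec u v = trace (vecMulVec u v * M) • vecMulVec u v := by
  rw [vecMulVec_mul, vecMulVec_mul_vecMulVec, trace_vecMulVec, vecMulVec_smul, dotProduct_comm]

lemma norm_trace_le_sqrt_card_mul_frobenius_norm {α ι : Type*} [SeminormedAddCommGroup α]
    [Fintype ι] (M : Matrix ι ι α) : ‖trace M‖ ≤ √(Fintype.card ι) * ‖M‖ := by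
  have diag_le : ∑ i, ‖M i i‖ ^ 2 ≤ ∑ i, ∑ j, ‖M i j‖ ^ 2 :=
    Finset.sum_le_sum fun i _ =>
      Finset.single_le_sum (f := fun j => ‖M i j‖ ^ 2) (fun _ _ => sq_nonneg _) (Finset.mem_univ i)
  have norm_eq : ‖M‖ = √(∑ i, ∑ j, ‖M i j‖ ^ 2) := by
    simp [frobenius_norm_def, Real.sqrt_eq_rpow]
  calc ‖trace M‖ ≤ ∑ i, ‖M i i‖ := norm_sum_le _ _
    _ ≤ √(Fintype.card ι * ∑ i, ‖M i i‖ ^ 2) := Real.le_sqrt_of_sq_le sq_sum_le_card_mul_sum_sq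
    _ ≤ √(Fintype.card ι * ∑ i, ∑ j, ‖M i j‖ ^ 2) := by gcongr
    _ = √(Fintype.card ι) * ‖M‖ := by rw [Real.sqrt_mul (Nat.cast_nonneg _), norm_eq]

section RCLike

variable {𝕜 ι κ μ : Type*} [RCLike 𝕜] [Fintype ι] [Fintype κ] [Fintype μ]

lemma frobenius_norm_vecMulVec_le (u : ι → 𝕜) (v : κ → 𝕜) :
    ‖vecMulVec u v‖ ≤ ‖WithLp.toLp 2 u‖ * ‖WithLp.toLp 2 v‖ := by
  rw [vecMulVec_eq Unit, ← frobenius_norm_replicateCol (ι := Unit),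
    ← frobenius_norm_replicateRow (ι := Unit)]
  exact frobenius_norm_mul _ _

lemma frobenius_norm_vecMulVec_star_le_one {n : ι → 𝕜} (hn : ‖WithLp.toLp 2 n‖ ≤ 1) :
    ‖vecMulVec n (star n)‖ ≤ 1 := by
  have norm_star : ‖WithLp.toLp 2 (star n)‖ = ‖WithLp.toLp 2 n‖ := by
    simp [EuclideanSpace.norm_eq]
  calc ‖vecMulVec n (star n)‖ ≤ ‖WithLp.toLp 2 n‖ * ‖WithLp.toLp 2 (star n)‖ :=
        frobenius_norm_vecMulVec_le n (star n)
    _ ≤ 1 := mul_le_one₀ hn (norm_nonneg _) (norm_star.trans_le hn)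

lemma frobenius_norm_mul_le_left {N : Matrix κ ι 𝕜} (hN : ‖N‖ ≤ 1) (M : Matrix ι μ 𝕜) :
    ‖N * M‖ ≤ ‖M‖ :=
  (frobenius_norm_mul N M).trans (mul_le_of_le_one_left (norm_nonneg M) hN)

lemma frobenius_norm_mul_le_right (M : Matrix κ ι 𝕜) {N : Matrix ι μ 𝕜} (hN : ‖N‖ ≤ 1) :
    ‖M * N‖ ≤ ‖M‖ :=
  (frobenius_norm_mul M N).trans (mul_le_of_le_one_right (norm_nonneg M) hN)

lemma frobenius_norm_mul_le_norm_mul_add_norm_sub_conjTranspose {N : Matrix ι ι 𝕜}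
    (hN : N.IsHermitian) (hN_le : ‖N‖ ≤ 1) (M : Matrix ι ι 𝕜) :
    ‖N * M‖ ≤ ‖M * N‖ + ‖M - Mᴴ‖ := by
  have decomp : N * M = (M * N)ᴴ + N * (M - Mᴴ) := by
    rw [conjTranspose_mul, hN.eq, mul_sub, add_sub_cancel]
  calc ‖N * M‖ ≤ ‖(M * N)ᴴ‖ + ‖N * (M - Mᴴ)‖ := decomp ▸ norm_add_le _ _
    _ ≤ ‖M * N‖ + ‖M - Mᴴ‖ :=
      add_le_add (frobenius_norm_conjTranspose _).le (frobenius_norm_mul_le_left hN_le _)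

variable [DecidableEq ι]

lemma frobenius_norm_vecMulVec_mul_mul_vecMulVec_le {u v : ι → 𝕜} (h : ‖vecMulVec u v‖ ≤ 1)
    (M : Matrix ι ι 𝕜) :
    ‖vecMulVec u v * M * vecMulVec u v‖ ≤
      ‖trace M‖ + √(Fintype.card ι) * ‖(1 - vecMulVec u v) * M‖ := by
  have trace_eq : trace (vecMulVec u v * M) = trace M - trace ((1 - vecMulVec u v) * M) := by
    rw [sub_mul, one_mul, trace_sub, sub_sub_cancel]
  calc ‖vecMulVec u v * M * vecMulVec u v‖
      = ‖trace (vecMulVec u v * M)‖ * ‖vecMulVec u v‖ := by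
        rw [vecMulVec_mul_mul_vecMulVec, norm_smul]
    _ ≤ ‖trace (vecMulVec u v * M)‖ := mul_le_of_le_one_right (norm_nonneg _) h
    _ ≤ ‖trace M‖ + ‖trace ((1 - vecMulVec u v) * M)‖ := trace_eq ▸ norm_sub_le _ _
    _ ≤ _ := by gcongr; exact norm_trace_le_sqrt_card_mul_frobenius_norm _

theorem pointwise_div_curl_tangential_estimate_general (M : Matrix ι ι 𝕜) {n : ι → 𝕜}
    (hn : ‖WithLp.toLp 2 n‖ ≤ 1) :
    ‖M‖ ≤ (2 + √(Fintype.card ι)) *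
      (‖trace M‖ + ‖M - Mᴴ‖ + ‖(1 - vecMulVec n (star n)) * M‖) := by
  have hN := frobenius_norm_vecMulVec_star_le_one hn
  have hN_herm : (vecMulVec n (star n)).IsHermitian := by
    rw [IsHermitian, conjTranspose_vecMulVec, star_star]
  have normal_normal := frobenius_norm_vecMulVec_mul_mul_vecMulVec_le hN M
  set N := vecMulVec n (star n)
  have split_M : ‖M‖ ≤ ‖(1 - N) * M‖ + ‖N * M‖ := by
    simpa [sub_mul] using norm_add_le ((1 - N) * M) (N * M)
  have normal_row := frobenius_norm_mul_le_norm_mul_add_norm_sub_conjTranspose hN_herm hN M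
  have normal_column : ‖M * N‖ ≤ ‖(1 - N) * M‖ + ‖N * M * N‖ :=
    calc ‖M * N‖ ≤ ‖(1 - N) * M * N‖ + ‖N * M * N‖ := by
          simpa [sub_mul] using norm_add_le ((1 - N) * M * N) (N * M * N)
      _ ≤ ‖(1 - N) * M‖ + ‖N * M * N‖ := by gcongr; exact frobenius_norm_mul_le_right _ hN
  calc ‖M‖ ≤ ‖trace M‖ + ‖M - Mᴴ‖ + (2 + √(Fintype.card ι)) * ‖(1 - N) * M‖ := by linarith
    _ ≤ (2 + √(Fintype.card ι)) * (‖trace M‖ + ‖M - Mᴴ‖ + ‖(1 - N) * M‖) := by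
      rw [mul_add _ (_ + _)]
      gcongr
      exact le_mul_of_one_le_left (by positivity) (by linarith [Real.sqrt_nonneg (Fintype.card ι)])

end RCLike

/-- Pointwise div–curl–tangential estimate for matrices (the algebraic core of
Lemma `app:pwdiff` and Lemma `pwHlemma`). -/
theorem pointwise_div_curl_tangential_estimate :
    ∃ C > (0 : ℝ), ∀ (M : Matrix (Fin 3) (Fin 3) ℝ) (n : Fin 3 → ℝ),
      (∑ i, (n i) ^ 2) = 1 →
      frob M ≤ C * (|Matrix.trace M| + frob (M - Mᵀ) +
        frob ((1 - Matrix.vecMulVec n n) * M)) := by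
  refine ⟨2 + √(Fintype.card (Fin 3)), by positivity, fun M n hn => ?_⟩
  simpa only [frob_eq_frobenius_norm, Real.norm_eq_abs, conjTranspose_eq_transpose_of_trivial,
    star_trivial] using pointwise_div_curl_tangential_estimate_general M (n := n)
      (by simp [EuclideanSpace.norm_eq, hn])
end
end

section
/- Peetre-type symbol estimate (used in the proof of the second inequality of Lemma `lem:LeibnitzBasic`): there exists a constant C > 0 such that for all s ∈ [0, 1/2] and all ξ, η ∈ ℝ², | (1+‖ξ‖²)^{1/4} − (1+‖ξ−η‖²)^{1/4} | · (1+‖ξ‖²)^{s/2} ≤ C · (1+‖η‖²)^{(3/2−s)/2} · (1+‖ξ−η‖²)^{(s−1/2)/2}. -/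
noncomputable section

/-!
With `⟨x⟩ = (1 + ‖x‖²)^{1/2}`, multiply the claim by `⟨ξ - η⟩^{1/2 - s}`. The weight
`⟨ξ⟩^s ⟨ξ - η⟩^{1/2 - s}` is at most `⟨ξ⟩^{1/2} + ⟨ξ - η⟩^{1/2}`, which turns the difference of
square roots into `|⟨ξ⟩ - ⟨ξ - η⟩|`. This is at most `‖η‖` because `⟨x⟩` is the Euclidean norm of
`(1, x)`, and `‖η‖ ≤ ⟨η⟩ ≤ ⟨η⟩^{3/2 - s}`.
-/

section Real

variable {a b s t : ℝ}

lemma rpow_mul_rpow_le_rpow_add_add_rpow_add (ha : 0 ≤ a) (hb : 0 ≤ b) (hs : 0 ≤ s)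
    (ht : 0 ≤ t) : a ^ s * b ^ t ≤ a ^ (s + t) + b ^ (s + t) := by
  rcases le_total a b with hab | hba
  · calc a ^ s * b ^ t ≤ b ^ s * b ^ t := by gcongr
      _ = b ^ (s + t) := (Real.rpow_add_of_nonneg hb hs ht).symm
      _ ≤ a ^ (s + t) + b ^ (s + t) := le_add_of_nonneg_left (by positivity)
  · calc a ^ s * b ^ t ≤ a ^ s * a ^ t := by gcongr
      _ = a ^ (s + t) := (Real.rpow_add_of_nonneg ha hs ht).symm
      _ ≤ a ^ (s + t) + b ^ (s + t) := le_add_of_nonneg_right (by positivity)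

lemma abs_rpow_sub_rpow_mul_rpow_mul_rpow_le (ha : 0 ≤ a) (hb : 0 ≤ b) (hs : 0 ≤ s)
    (ht : 0 ≤ t) :
    |a ^ (s + t) - b ^ (s + t)| * (a ^ s * b ^ t) ≤
      |a ^ (2 * (s + t)) - b ^ (2 * (s + t))| := by
  have hsq {c : ℝ} (hc : 0 ≤ c) : c ^ (2 * (s + t)) = (c ^ (s + t)) ^ 2 := by
    rw [mul_comm, Real.rpow_mul hc, Real.rpow_two]
  calc |a ^ (s + t) - b ^ (s + t)| * (a ^ s * b ^ t)
      ≤ |a ^ (s + t) - b ^ (s + t)| * (a ^ (s + t) + b ^ (s + t)) := by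
        gcongr
        exact rpow_mul_rpow_le_rpow_add_add_rpow_add ha hb hs ht
    _ = |a ^ (s + t) - b ^ (s + t)| * |a ^ (s + t) + b ^ (s + t)| := by
        rw [abs_of_nonneg (by positivity : 0 ≤ a ^ (s + t) + b ^ (s + t))]
    _ = |a ^ (2 * (s + t)) - b ^ (2 * (s + t))| := by
        rw [hsq ha, hsq hb, sq_sub_sq, abs_mul, mul_comm]

end Real

section JapaneseBracket

variable {E : Type*} [SeminormedAddCommGroup E]

/-- The Japanese bracket `⟨x⟩ = (1 + ‖x‖²)^{1/2}`, the weight in which the symbol estimate is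
phrased. -/
def japaneseBracket (x : E) : ℝ := √(1 + ‖x‖ ^ 2)

lemma one_le_japaneseBracket (x : E) : 1 ≤ japaneseBracket x :=
  Real.one_le_sqrt.2 (le_add_of_nonneg_right (sq_nonneg _))

lemma japaneseBracket_pos (x : E) : 0 < japaneseBracket x :=
  one_pos.trans_le (one_le_japaneseBracket x)

lemma norm_le_japaneseBracket (x : E) : ‖x‖ ≤ japaneseBracket x :=
  Real.le_sqrt_of_sq_le (le_add_of_nonneg_left zero_le_one)

lemma japaneseBracket_rpow (x : E) (r : ℝ) :
    japaneseBracket x ^ r = (1 + ‖x‖ ^ 2) ^ (r / 2) :=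
  (Real.rpow_div_two_eq_sqrt r (by positivity)).symm

lemma japaneseBracket_eq_norm_toLp (x : E) :
    japaneseBracket x = ‖WithLp.toLp 2 ((1 : ℝ), x)‖ := by
  simp [japaneseBracket, WithLp.prod_norm_eq_of_L2]

lemma abs_japaneseBracket_sub_japaneseBracket_le (x y : E) :
    |japaneseBracket x - japaneseBracket y| ≤ ‖x - y‖ := by
  rw [japaneseBracket_eq_norm_toLp, japaneseBracket_eq_norm_toLp]
  refine (abs_norm_sub_norm_le _ _).trans_eq ?_
  rw [← WithLp.toLp_sub, Prod.mk_sub_mk, sub_self, WithLp.norm_toLp_snd]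

lemma abs_japaneseBracket_rpow_half_sub_mul_rpow_le {s : ℝ} (hs : s ∈ Set.Icc (0 : ℝ) (1 / 2))
    (x y : E) :
    |japaneseBracket x ^ (1 / 2 : ℝ) - japaneseBracket y ^ (1 / 2 : ℝ)| * japaneseBracket x ^ s ≤
      ‖x - y‖ * japaneseBracket y ^ (s - 1 / 2) := by
  have hy := japaneseBracket_pos y
  have hdiff : |japaneseBracket x ^ (1 / 2 : ℝ) - japaneseBracket y ^ (1 / 2 : ℝ)| *
      (japaneseBracket x ^ s * japaneseBracket y ^ (1 / 2 - s)) ≤ ‖x - y‖ := by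
    refine le_trans ?_ (abs_japaneseBracket_sub_japaneseBracket_le x y)
    simpa using abs_rpow_sub_rpow_mul_rpow_mul_rpow_le (japaneseBracket_pos x).le hy.le hs.1
      (sub_nonneg.2 hs.2)
  rwa [← neg_sub (1 / 2) s, Real.rpow_neg hy.le, ← div_eq_mul_inv,
    le_div_iff₀ (Real.rpow_pos_of_pos hy _), mul_assoc]

end JapaneseBracket

theorem peetre_symbol_estimate_general {E : Type*} [SeminormedAddCommGroup E] {s : ℝ}
    (hs : s ∈ Set.Icc (0 : ℝ) (1 / 2)) (ξ η : E) :
    |(1 + ‖ξ‖ ^ 2) ^ ((1 : ℝ) / 4) - (1 + ‖ξ - η‖ ^ 2) ^ ((1 : ℝ) / 4)| *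
        (1 + ‖ξ‖ ^ 2) ^ (s / 2) ≤
      (1 + ‖η‖ ^ 2) ^ ((3 / 2 - s) / 2) * (1 + ‖ξ - η‖ ^ 2) ^ ((s - 1 / 2) / 2) := by
  have hη : ‖η‖ ≤ japaneseBracket η ^ (3 / 2 - s) :=
    (norm_le_japaneseBracket η).trans <|
      Real.self_le_rpow_of_one_le (one_le_japaneseBracket η) (by linarith [hs.2])
  rw [show (1 : ℝ) / 4 = 1 / 2 / 2 by norm_num]
  simp only [← japaneseBracket_rpow]
  calc |japaneseBracket ξ ^ (1 / 2 : ℝ) - japaneseBracket (ξ - η) ^ (1 / 2 : ℝ)| *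
        japaneseBracket ξ ^ s
      ≤ ‖η‖ * japaneseBracket (ξ - η) ^ (s - 1 / 2) := by
        simpa only [sub_sub_cancel] using
          abs_japaneseBracket_rpow_half_sub_mul_rpow_le hs ξ (ξ - η)
    _ ≤ japaneseBracket η ^ (3 / 2 - s) * japaneseBracket (ξ - η) ^ (s - 1 / 2) :=
        mul_le_mul_of_nonneg_right hη (Real.rpow_nonneg (japaneseBracket_pos _).le _)

/-- Peetre-type symbol estimate used in the proof of the second inequality of
Lemma `lem:LeibnitzBasic`. -/
theorem peetre_symbol_estimate :
    ∃ C > (0 : ℝ), ∀ s ∈ Set.Icc (0 : ℝ) (1 / 2),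
      ∀ ξ η : EuclideanSpace ℝ (Fin 2),
        |(1 + ‖ξ‖ ^ 2) ^ ((1 : ℝ) / 4) - (1 + ‖ξ - η‖ ^ 2) ^ ((1 : ℝ) / 4)| *
            (1 + ‖ξ‖ ^ 2) ^ (s / 2) ≤
          C * (1 + ‖η‖ ^ 2) ^ ((3 / 2 - s) / 2) *
            (1 + ‖ξ - η‖ ^ 2) ^ ((s - 1 / 2) / 2) :=
  ⟨1, one_pos, fun _ hs ξ η => by simpa only [one_mul] using peetre_symbol_estimate_general hs ξ η⟩
end
end

section
/- Friedrichs-type commutator estimate (the core of Lemma `lem:mutiplicationsmoothingcommute`, estimate (eq:smoothingvectorfieldcommute)): let B > 0 and let b : ℝ² → ℝ² be a C¹ vector field with sup_z ( ‖b(z)‖ + ‖Db(z)‖ ) ≤ B. Then there exists a constant C > 0, depending only on φ and B, such that for every ε ∈ (0,1] and every compactly supported C¹ function g : ℝ² → ℝ, ‖ S_ε(b·∇g) − b·∇(S_ε g) ‖_{L²(ℝ²)} ≤ C · ‖g‖_{L²(ℝ²)}, where b·∇g = b₁ ∂₁g + b₂ ∂₂g. In particular the bound is uniform in ε and involves no derivatives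 of g on the right-hand side. -/
noncomputable section

open MeasureTheory
open scoped NNReal ENNReal

/-- The plane `ℝ²`. -/
abbrev E2 : Type := EuclideanSpace ℝ (Fin 2)

/-- The tangential smoothing operator `S_ε f = φ_ε ⋆ f`, where `φ_ε(z) = ε⁻²φ(z/ε)`. -/
def smoothOp (φ : E2 → ℝ) (ε : ℝ) (f : E2 → ℝ) (z : E2) : ℝ :=
  ∫ w : E2, (ε ^ 2)⁻¹ * φ (ε⁻¹ • w) * f (z - w)

/-! Integrating by parts in `∫ ψ(w) ∇g(z - w)·b(z - w) dw` moves the derivative of `g` onto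
`ψ(w) b(z - w)`, so the commutator of `ψ ⋆ ·` with `b·∇` is an integral of `g(z - w)` against
`∇ψ(w)·(b(z - w) - b(z)) - ψ(w) (div b)(z - w)`. If `b` is `K`-Lipschitz, the increment of `b`
contributes a factor `K|w|`, and the kernel is at most `K (|w| |∇ψ(w)| + n |ψ(w)|)`. For `ψ = φ_ε`
the factor `|w|` compensates the `ε⁻¹` lost in `∇φ_ε`: the integral of this bound does not depend
on `ε`. Young's inequality then gives the estimate in every `Lᵖ`. -/

open Module ContinuousLinearMap
open scoped Convolution

section Young

theorem lintegral_mul_rpow_le {α : Type*} [MeasurableSpace α] {μ : Measure α} {k f : α → ℝ≥0∞}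
    (hk : AEMeasurable k μ) (hf : AEMeasurable f μ) {p : ℝ} (hp : 1 ≤ p) :
    (∫⁻ x, k x * f x ∂μ) ^ p ≤ (∫⁻ x, k x ∂μ) ^ (p - 1) * ∫⁻ x, k x * f x ^ p ∂μ := by
  have hp₀ : 0 < p := one_pos.trans_le hp
  have hf' : AEMeasurable f (μ.withDensity k) := hf.mono_ac (withDensity_absolutelyContinuous μ k)
  have jensen := eLpNorm'_le_eLpNorm'_mul_rpow_measure_univ one_pos hp hf'.aestronglyMeasurable
  simp only [eLpNorm', enorm_eq_self, ENNReal.rpow_one, div_one, withDensity_apply _ .univ,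
    Measure.restrict_univ, lintegral_withDensity_eq_lintegral_mul₀ hk hf,
    lintegral_withDensity_eq_lintegral_mul₀ hk (hf.pow_const p), Pi.mul_apply] at jensen
  calc (∫⁻ x, k x * f x ∂μ) ^ p
      ≤ ((∫⁻ x, k x * f x ^ p ∂μ) ^ (1 / p) * (∫⁻ x, k x ∂μ) ^ (1 - 1 / p)) ^ p := by gcongr
    _ = (∫⁻ x, k x ∂μ) ^ (p - 1) * ∫⁻ x, k x * f x ^ p ∂μ := by
        rw [ENNReal.mul_rpow_of_nonneg _ _ hp₀.le, ← ENNReal.rpow_mul, ← ENNReal.rpow_mul,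
          one_div_mul_cancel hp₀.ne', ENNReal.rpow_one, sub_mul, one_div_mul_cancel hp₀.ne',
          one_mul, mul_comm]

variable {G : Type*} [AddGroup G] [MeasurableSpace G] [MeasurableAdd₂ G] [MeasurableNeg G]
  {μ : Measure G} [SFinite μ] [μ.IsAddLeftInvariant] {k f : G → ℝ≥0∞}

theorem lintegral_lconvolution (hk : Measurable k) (hf : Measurable f) :
    ∫⁻ x, (k ⋆ₗ[μ] f) x ∂μ = (∫⁻ x, k x ∂μ) * ∫⁻ x, f x ∂μ := by
  simp only [lconvolution_def]
  rw [lintegral_lintegral_swap (by fun_prop), ← lintegral_mul_const _ hk]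
  refine lintegral_congr fun y ↦ ?_
  rw [lintegral_const_mul _ (by fun_prop), lintegral_add_left_eq_self]

theorem lintegral_lconvolution_rpow_le (hk : Measurable k) (hf : Measurable f) {p : ℝ}
    (hp : 1 ≤ p) :
    ∫⁻ x, (k ⋆ₗ[μ] f) x ^ p ∂μ ≤ (∫⁻ x, k x ∂μ) ^ p * ∫⁻ x, f x ^ p ∂μ :=
  calc ∫⁻ x, (k ⋆ₗ[μ] f) x ^ p ∂μ
      ≤ ∫⁻ x, (∫⁻ y, k y ∂μ) ^ (p - 1) * (k ⋆ₗ[μ] fun y ↦ f y ^ p) x ∂μ :=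
        lintegral_mono fun x ↦ lintegral_mul_rpow_le hk.aemeasurable
          (hf.comp (measurable_neg.add_const x)).aemeasurable hp
    _ = (∫⁻ x, k x ∂μ) ^ (p - 1) * ((∫⁻ x, k x ∂μ) * ∫⁻ x, f x ^ p ∂μ) := by
        rw [lintegral_const_mul _ (by fun_prop), lintegral_lconvolution hk (hf.pow_const p)]
    _ = (∫⁻ x, k x ∂μ) ^ p * ∫⁻ x, f x ^ p ∂μ := by
        nth_rw 2 [← ENNReal.rpow_one (∫⁻ x, k x ∂μ)]
        rw [← mul_assoc, ← ENNReal.rpow_add_of_nonneg _ _ (sub_nonneg.2 hp) zero_le_one,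
          sub_add_cancel]

theorem lconvolution_le_lintegral_mul_eLpNormEssSup (hk : Measurable k) (x : G) :
    (k ⋆ₗ[μ] f) x ≤ (∫⁻ y, k y ∂μ) * eLpNormEssSup f μ := by
  have hqmp : Measure.QuasiMeasurePreserving (fun y ↦ -y + x) μ μ :=
    (quasiMeasurePreserving_add_right μ x).comp (quasiMeasurePreserving_neg μ)
  rw [← lintegral_mul_const _ hk, lconvolution_def]
  refine lintegral_mono_ae ?_
  filter_upwards [hqmp.ae (ae_le_eLpNormEssSup (f := f))] with y hy
  gcongr
  exact hy

theorem eLpNorm_lconvolution_le (hk : Measurable k) (hf : Measurable f) {p : ℝ≥0∞} (hp : 1 ≤ p) :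
    eLpNorm (k ⋆ₗ[μ] f) p μ ≤ (∫⁻ x, k x ∂μ) * eLpNorm f p μ := by
  rcases eq_or_ne p ∞ with rfl | hp_top
  · simpa only [eLpNorm_exponent_top] using eLpNormEssSup_le_of_ae_enorm_bound
      (.of_forall (lconvolution_le_lintegral_mul_eLpNormEssSup hk))
  have hp_real : 1 ≤ p.toReal := by simpa using ENNReal.toReal_mono hp_top hp
  have hp₀ : 0 < p.toReal := one_pos.trans_le hp_real
  have hp_ne : p ≠ 0 := (one_pos.trans_le hp).ne'
  simp only [eLpNorm_eq_lintegral_rpow_enorm_toReal hp_ne hp_top, enorm_eq_self]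
  calc (∫⁻ x, (k ⋆ₗ[μ] f) x ^ p.toReal ∂μ) ^ (1 / p.toReal)
      ≤ ((∫⁻ x, k x ∂μ) ^ p.toReal * ∫⁻ x, f x ^ p.toReal ∂μ) ^ (1 / p.toReal) := by
        gcongr
        exact lintegral_lconvolution_rpow_le hk hf hp_real
    _ = (∫⁻ x, k x ∂μ) * (∫⁻ x, f x ^ p.toReal ∂μ) ^ (1 / p.toReal) := by
        rw [ENNReal.mul_rpow_of_nonneg _ _ (by positivity), ← ENNReal.rpow_mul,
          mul_one_div_cancel hp₀.ne', ENNReal.rpow_one]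

end Young

section NormedSpace

variable {E F : Type*} [NormedAddCommGroup E] [NormedSpace ℝ E]
  [NormedAddCommGroup F] [NormedSpace ℝ F]

/-- The rescaled mollifier `φ_ε(w) = ε⁻ⁿ φ(w / ε)` with `n = dim E`. -/
def rescale (φ : E → ℝ) (ε : ℝ) (w : E) : ℝ :=
  (ε ^ finrank ℝ E)⁻¹ * φ (ε⁻¹ • w)

theorem contDiff_rescale {φ : E → ℝ} {n : WithTop ℕ∞} (hφ : ContDiff ℝ n φ) (ε : ℝ) :
    ContDiff ℝ n (rescale φ ε) :=
  contDiff_const.mul (hφ.comp (contDiff_const_smul _))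

theorem hasCompactSupport_rescale {φ : E → ℝ} {ε : ℝ} (hφ : HasCompactSupport φ) (hε : ε ≠ 0) :
    HasCompactSupport (rescale φ ε) :=
  (hφ.comp_smul (inv_ne_zero hε)).mul_left

theorem fderiv_rescale {φ : E → ℝ} (hφ : Differentiable ℝ φ) (ε : ℝ) (w : E) :
    fderiv ℝ (rescale φ ε) w = (ε ^ finrank ℝ E)⁻¹ • ε⁻¹ • fderiv ℝ φ (ε⁻¹ • w) := by
  unfold rescale
  rw [fderiv_const_mul (by fun_prop), fderiv_comp_smul]

/-- The divergence of a vector field, encoded without coordinates as the trace of its derivative. -/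
def divergence (X : E → E) (x : E) : ℝ :=
  LinearMap.trace ℝ E (fderiv ℝ X x)

theorem fderiv_comp_const_sub (f : E → F) (z w : E) :
    fderiv ℝ (fun w ↦ f (z - w)) w = -fderiv ℝ f (z - w) := by
  simpa [fderiv_comp_add_left, sub_eq_add_neg] using
    fderiv_comp_smul (f := fun u ↦ f (z + u)) (x := w) (-1 : ℝ)

theorem divergence_comp_const_sub (X : E → E) (z w : E) :
    divergence (fun w ↦ X (z - w)) w = -divergence X (z - w) := by
  simp [divergence, fderiv_comp_const_sub]

variable [FiniteDimensional ℝ E]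

theorem divergence_smul {ψ : E → ℝ} {X : E → E} {x : E} (hψ : DifferentiableAt ℝ ψ x)
    (hX : DifferentiableAt ℝ X x) :
    divergence (fun y ↦ ψ y • X y) x = ψ x * divergence X x + fderiv ℝ ψ x (X x) := by
  simp [divergence, fderiv_fun_smul hψ hX]

theorem continuous_divergence {X : E → E} (hX : ContDiff ℝ 1 X) : Continuous (divergence X) :=
  (LinearMap.continuous_of_finiteDimensional
    (LinearMap.trace ℝ E ∘ₗ ContinuousLinearMap.coeLM ℝ)).comp (hX.continuous_fderiv one_ne_zero)

theorem fderiv_basis_coord_comp {ι : Type*} (e : Basis ι ℝ E) {X : E → E} {x : E}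
    (hX : DifferentiableAt ℝ X x) (i : ι) (v : E) :
    fderiv ℝ (fun y ↦ e.coord i (X y)) x v = e.coord i (fderiv ℝ X x v) :=
  DFunLike.congr_fun ((e.coord i).toContinuousLinearMap.hasFDerivAt.comp x hX.hasFDerivAt).fderiv v

theorem divergence_eq_sum_basis {ι : Type*} [Fintype ι] (e : Basis ι ℝ E) {X : E → E} {x : E}
    (hX : DifferentiableAt ℝ X x) :
    divergence X x = ∑ i, fderiv ℝ (fun y ↦ e.coord i (X y)) x (e i) := by
  classical
  simp_rw [fderiv_basis_coord_comp e hX, divergence, LinearMap.trace_eq_matrix_trace ℝ e,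
    Matrix.trace, Matrix.diag_apply, LinearMap.toMatrix_apply, coe_coe, Basis.coord_apply]

variable [MeasurableSpace E] [BorelSpace E] {μ : Measure E} [μ.IsAddHaarMeasure] {g : E → F}

theorem integral_smul_fderiv_eq_neg_fderiv_smul_of_hasCompactSupport {f : E → ℝ}
    (hf : ContDiff ℝ 1 f) (hfc : HasCompactSupport f) (hg : ContDiff ℝ 1 g) (v : E) :
    ∫ x, f x • fderiv ℝ g x v ∂μ = -∫ x, fderiv ℝ f x v • g x ∂μ := by
  have hf'c : HasCompactSupport fun x ↦ fderiv ℝ f x v := hfc.fderiv_apply ℝ v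
  exact integral_smul_fderiv_eq_neg_fderiv_smul_of_integrable
    (Continuous.integrable_of_hasCompactSupport (by fun_prop) hf'c.smul_right)
    (Continuous.integrable_of_hasCompactSupport (by fun_prop) hfc.smul_right)
    (Continuous.integrable_of_hasCompactSupport (by fun_prop) hfc.smul_right)
    (fun x _ ↦ hf.differentiable one_ne_zero x) (fun x _ ↦ hg.differentiable one_ne_zero x)

theorem integral_fderiv_apply_eq_neg_integral_divergence_smul {X : E → E} (hX : ContDiff ℝ 1 X)
    (hXc : HasCompactSupport X) (hg : ContDiff ℝ 1 g) :
    ∫ x, fderiv ℝ g x (X x) ∂μ = -∫ x, divergence X x • g x ∂μ := by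
  let e := finBasis ℝ E
  let c i : E → ℝ := fun x ↦ e.coord i (X x)
  have hc i : ContDiff ℝ 1 (c i) := (e.coord i).toContinuousLinearMap.contDiff.comp hX
  have hcc i : HasCompactSupport (c i) := hXc.comp_left (map_zero (e.coord i))
  have expand x : fderiv ℝ g x (X x) = ∑ i, c i x • fderiv ℝ g x (e i) := by
    conv_lhs => rw [← e.sum_repr (X x)]
    simp only [map_sum, map_smul, c, Basis.coord_apply]
  have expand_div x : divergence X x • g x = ∑ i, fderiv ℝ (c i) x (e i) • g x := by
    rw [divergence_eq_sum_basis e (hX.differentiable one_ne_zero x), Finset.sum_smul]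
  simp only [expand, expand_div]
  rw [integral_finsetSum _ fun i _ ↦ ?_, integral_finsetSum _ fun i _ ↦ ?_,
    ← Finset.sum_neg_distrib]
  · exact Finset.sum_congr rfl fun i _ ↦
      integral_smul_fderiv_eq_neg_fderiv_smul_of_hasCompactSupport (hc i) (hcc i) hg (e i)
  · exact Continuous.integrable_of_hasCompactSupport (by fun_prop)
      ((hcc i).fderiv_apply ℝ (e i)).smul_right
  · exact Continuous.integrable_of_hasCompactSupport (by fun_prop) (hcc i).smul_right

/-- The commutator `[ψ ⋆ ·, b·∇] g` of mollification by `ψ` with differentiation along `b`. -/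
def mollifierCommutator (μ : Measure E) (ψ : E → ℝ) (b : E → E) (g : E → F) (z : E) : F :=
  (ψ ⋆[lsmul ℝ ℝ, μ] fun y ↦ fderiv ℝ g y (b y)) z - fderiv ℝ (ψ ⋆[lsmul ℝ ℝ, μ] g) z (b z)

variable {ψ : E → ℝ} {b : E → E}

theorem fderiv_convolution_apply (hψ : ContDiff ℝ 1 ψ) (hψc : HasCompactSupport ψ)
    (hg : Continuous g) (z v : E) :
    fderiv ℝ (ψ ⋆[lsmul ℝ ℝ, μ] g) z v = ∫ w, fderiv ℝ ψ w v • g (z - w) ∂μ := by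
  have hexists := (hψc.fderiv ℝ).convolutionExists_left ((lsmul ℝ ℝ).precompL E)
    (hψ.continuous_fderiv one_ne_zero) (hg.locallyIntegrable (μ := μ))
  rw [(hψc.hasFDerivAt_convolution_left (lsmul ℝ ℝ) hψ hg.locallyIntegrable z).fderiv,
    convolution_def, ContinuousLinearMap.integral_apply (hexists z)]
  rfl

theorem convolution_fderiv_apply (hψ : ContDiff ℝ 1 ψ) (hψc : HasCompactSupport ψ)
    (hb : ContDiff ℝ 1 b) (hg : ContDiff ℝ 1 g) (z : E) :
    (ψ ⋆[lsmul ℝ ℝ, μ] fun y ↦ fderiv ℝ g y (b y)) z =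
      ∫ w, (fderiv ℝ ψ w (b (z - w)) - ψ w * divergence b (z - w)) • g (z - w) ∂μ := by
  let X : E → E := fun w ↦ ψ w • b (z - w)
  have hX : ContDiff ℝ 1 X := hψ.smul (hb.comp (contDiff_const.sub contDiff_id))
  have hXc : HasCompactSupport X := hψc.smul_right
  have div_X w : divergence X w = fderiv ℝ ψ w (b (z - w)) - ψ w * divergence b (z - w) := by
    have hbw : DifferentiableAt ℝ (fun w ↦ b (z - w)) w :=
      (hb.comp (contDiff_const.sub contDiff_id)).differentiable one_ne_zero w
    rw [divergence_smul (hψ.differentiable one_ne_zero w) hbw, divergence_comp_const_sub]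
    ring
  have hgz : ContDiff ℝ 1 fun w ↦ g (z - w) := hg.comp (contDiff_const.sub contDiff_id)
  have parts := integral_fderiv_apply_eq_neg_integral_divergence_smul (μ := μ) hX hXc hgz
  simp only [fderiv_comp_const_sub, X, div_X, neg_apply, smul_neg, map_smul, integral_neg,
    neg_inj] at parts
  exact parts

theorem mollifierCommutator_eq_integral (hψ : ContDiff ℝ 1 ψ) (hψc : HasCompactSupport ψ)
    (hb : ContDiff ℝ 1 b) (hg : ContDiff ℝ 1 g) (z : E) :
    mollifierCommutator μ ψ b g z =
      ∫ w, (fderiv ℝ ψ w (b (z - w) - b z) - ψ w * divergence b (z - w)) • g (z - w) ∂μ := by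
  have hdiv := continuous_divergence hb
  rw [mollifierCommutator, convolution_fderiv_apply hψ hψc hb hg,
    fderiv_convolution_apply hψ hψc hg.continuous, ← integral_sub]
  · simp only [← sub_smul, map_sub, sub_right_comm]
  · refine Continuous.integrable_of_hasCompactSupport (by fun_prop)
      (HasCompactSupport.intro hψc fun w hw ↦ ?_)
    simp [image_eq_zero_of_notMem_tsupport hw, fderiv_of_notMem_tsupport (𝕜 := ℝ) hw]
  · exact Continuous.integrable_of_hasCompactSupport (by fun_prop)
      (hψc.fderiv_apply ℝ (b z)).smul_right

/-- The constant of the commutator estimate, `∫ (|w| |∇ψ(w)| + n |ψ(w)|) dw` with `n = dim E`. -/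
def commutatorConstant (μ : Measure E) (ψ : E → ℝ) : ℝ≥0∞ :=
  ∫⁻ w, (‖fderiv ℝ ψ w‖ₑ * ‖w‖ₑ + finrank ℝ E * ‖ψ w‖ₑ) ∂μ

theorem commutatorConstant_lt_top (hψ : ContDiff ℝ 1 ψ) (hψc : HasCompactSupport ψ) :
    commutatorConstant μ ψ < ∞ := by
  have hmoment : Integrable (fun w ↦ ‖w‖ • fderiv ℝ ψ w) μ :=
    Continuous.integrable_of_hasCompactSupport (by fun_prop)
      (HasCompactSupport.smul_left (f := fun w ↦ ‖w‖) (hψc.fderiv ℝ))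
  have hψi : Integrable ψ μ := hψ.continuous.integrable_of_hasCompactSupport hψc
  rw [commutatorConstant, lintegral_add_left (by fun_prop),
    lintegral_const_mul _ hψ.continuous.enorm.measurable, ENNReal.add_lt_top]
  exact ⟨by simpa [HasFiniteIntegral, enorm_smul, mul_comm] using hmoment.hasFiniteIntegral,
    ENNReal.mul_lt_top (ENNReal.natCast_lt_top _) hψi.hasFiniteIntegral⟩

variable {φ : E → ℝ} {ε : ℝ}

theorem lintegral_comp_inv_smul (f : E → ℝ≥0∞) (hε : ε ≠ 0) :
    ∫⁻ w, f (ε⁻¹ • w) ∂μ = ‖ε ^ finrank ℝ E‖ₑ * ∫⁻ w, f w ∂μ :=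
  calc ∫⁻ w, f (ε⁻¹ • w) ∂μ
      = ∫⁻ w, f w ∂μ.map (ε⁻¹ • ·) :=
        (lintegral_map_equiv f
          (Homeomorph.smulOfNeZero ε⁻¹ (inv_ne_zero hε)).toMeasurableEquiv).symm
    _ = ‖ε ^ finrank ℝ E‖ₑ * ∫⁻ w, f w ∂μ := by
        simp [Measure.map_addHaar_smul μ (inv_ne_zero hε), Real.enorm_eq_ofReal_abs]

theorem commutatorConstant_rescale (hφ : Differentiable ℝ φ) (hε : ε ≠ 0) :
    commutatorConstant μ (rescale φ ε) = commutatorConstant μ φ := by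
  have hscale : ‖(ε ^ finrank ℝ E)⁻¹‖ₑ * ‖ε ^ finrank ℝ E‖ₑ = 1 := by
    rw [← enorm_mul, inv_mul_cancel₀ (pow_ne_zero _ hε), enorm_one]
  have integrand w : ‖fderiv ℝ (rescale φ ε) w‖ₑ * ‖w‖ₑ + finrank ℝ E * ‖rescale φ ε w‖ₑ =
      ‖(ε ^ finrank ℝ E)⁻¹‖ₑ * (‖fderiv ℝ φ (ε⁻¹ • w)‖ₑ * ‖ε⁻¹ • w‖ₑ +
        finrank ℝ E * ‖φ (ε⁻¹ • w)‖ₑ) := by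
    rw [fderiv_rescale hφ, rescale, enorm_mul]
    simp only [enorm_smul]
    ring
  simp only [commutatorConstant, integrand]
  rw [lintegral_const_mul' _ _ enorm_ne_top,
    lintegral_comp_inv_smul (fun w ↦ ‖fderiv ℝ φ w‖ₑ * ‖w‖ₑ + finrank ℝ E * ‖φ w‖ₑ) hε,
    ← mul_assoc, hscale, one_mul]

end NormedSpace

section InnerProductSpace

variable {E F : Type*} [NormedAddCommGroup E] [InnerProductSpace ℝ E] [FiniteDimensional ℝ E]
  [NormedAddCommGroup F] [NormedSpace ℝ F] {b : E → E}

theorem norm_trace_le {𝕜 E : Type*} [RCLike 𝕜] [NormedAddCommGroup E] [InnerProductSpace 𝕜 E]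
    [FiniteDimensional 𝕜 E] (L : E →L[𝕜] E) :
    ‖LinearMap.trace 𝕜 E L‖ ≤ finrank 𝕜 E * ‖L‖ := by
  let e := stdOrthonormalBasis 𝕜 E
  rw [LinearMap.trace_eq_sum_inner _ e]
  calc ‖∑ i, inner 𝕜 (e i) (L (e i))‖
      ≤ ∑ _i : Fin (finrank 𝕜 E), ‖L‖ := norm_sum_le_of_le _ fun i _ ↦ by
        simpa using (norm_inner_le_norm (e i) (L (e i))).trans
          (mul_le_mul_of_nonneg_left (L.le_opNorm (e i)) (norm_nonneg _))
    _ = finrank 𝕜 E * ‖L‖ := by simp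

theorem enorm_divergence_le {K : ℝ≥0} (hb : LipschitzWith K b) (x : E) :
    ‖divergence b x‖ₑ ≤ K * finrank ℝ E := by
  have h : ‖divergence b x‖ ≤ K * finrank ℝ E :=
    calc ‖divergence b x‖ ≤ finrank ℝ E * ‖fderiv ℝ b x‖ := norm_trace_le _
      _ ≤ finrank ℝ E * K := by
        gcongr
        exact norm_fderiv_le_of_lipschitz ℝ hb
      _ = K * finrank ℝ E := mul_comm _ _
  exact_mod_cast (h : ‖divergence b x‖₊ ≤ K * finrank ℝ E)

variable [MeasurableSpace E] [BorelSpace E] {μ : Measure E} [μ.IsAddHaarMeasure] {ψ : E → ℝ}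
  {g : E → F}

theorem enorm_mollifierCommutator_le_lconvolution {K : ℝ≥0} (hψ : ContDiff ℝ 1 ψ)
    (hψc : HasCompactSupport ψ) (hb : ContDiff ℝ 1 b) (hbK : LipschitzWith K b)
    (hg : ContDiff ℝ 1 g) (z : E) :
    ‖mollifierCommutator μ ψ b g z‖ₑ ≤
      ((fun w ↦ K * (‖fderiv ℝ ψ w‖ₑ * ‖w‖ₑ + finrank ℝ E * ‖ψ w‖ₑ)) ⋆ₗ[μ] fun y ↦ ‖g y‖ₑ) z := by
  have hb_sub w : ‖b (z - w) - b z‖ₑ ≤ K * ‖w‖ₑ := by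
    simpa [edist_eq_enorm_sub] using hbK (z - w) z
  rw [mollifierCommutator_eq_integral hψ hψc hb hg, lconvolution_def]
  refine (enorm_integral_le_lintegral_enorm _).trans (lintegral_mono fun w ↦ ?_)
  rw [enorm_smul, neg_add_eq_sub]
  gcongr
  calc ‖fderiv ℝ ψ w (b (z - w) - b z) - ψ w * divergence b (z - w)‖ₑ
      ≤ ‖fderiv ℝ ψ w (b (z - w) - b z)‖ₑ + ‖ψ w‖ₑ * ‖divergence b (z - w)‖ₑ := by
        rw [← enorm_mul]
        exact enorm_sub_le
    _ ≤ ‖fderiv ℝ ψ w‖ₑ * (K * ‖w‖ₑ) + ‖ψ w‖ₑ * (K * finrank ℝ E) := by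
        gcongr
        · exact ((fderiv ℝ ψ w).le_opENorm _).trans (by gcongr; exact hb_sub w)
        · exact enorm_divergence_le hbK _
    _ = K * (‖fderiv ℝ ψ w‖ₑ * ‖w‖ₑ + finrank ℝ E * ‖ψ w‖ₑ) := by ring

theorem eLpNorm_mollifierCommutator_le {K : ℝ≥0} {p : ℝ≥0∞} (hψ : ContDiff ℝ 1 ψ)
    (hψc : HasCompactSupport ψ) (hb : ContDiff ℝ 1 b) (hbK : LipschitzWith K b)
    (hg : ContDiff ℝ 1 g) (hp : 1 ≤ p) :
    eLpNorm (mollifierCommutator μ ψ b g) p μ ≤ K * commutatorConstant μ ψ * eLpNorm g p μ := by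
  have hψ₀ := hψ.continuous
  have hg₀ : Measurable fun y ↦ ‖g y‖ₑ := hg.continuous.enorm.measurable
  let k : E → ℝ≥0∞ := fun w ↦ K * (‖fderiv ℝ ψ w‖ₑ * ‖w‖ₑ + finrank ℝ E * ‖ψ w‖ₑ)
  have hk : Measurable k := by fun_prop
  calc eLpNorm (mollifierCommutator μ ψ b g) p μ
      ≤ eLpNorm (k ⋆ₗ[μ] fun y ↦ ‖g y‖ₑ) p μ :=
        eLpNorm_mono_enorm (enorm_mollifierCommutator_le_lconvolution hψ hψc hb hbK hg)
    _ ≤ (∫⁻ w, k w ∂μ) * eLpNorm (fun y ↦ ‖g y‖ₑ) p μ := eLpNorm_lconvolution_le hk hg₀ hp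
    _ = K * commutatorConstant μ ψ * eLpNorm g p μ := by
        rw [lintegral_const_mul _ (by fun_prop), eLpNorm_enorm, commutatorConstant]

theorem eLpNorm_mollifierCommutator_rescale_le {φ : E → ℝ} {ε : ℝ} {K : ℝ≥0} {p : ℝ≥0∞}
    (hφ : ContDiff ℝ 1 φ) (hφc : HasCompactSupport φ) (hb : ContDiff ℝ 1 b)
    (hbK : LipschitzWith K b) (hε : ε ≠ 0) (hg : ContDiff ℝ 1 g) (hp : 1 ≤ p) :
    eLpNorm (mollifierCommutator μ (rescale φ ε) b g) p μ ≤
      K * commutatorConstant μ φ * eLpNorm g p μ := by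
  rw [← commutatorConstant_rescale (hφ.differentiable one_ne_zero) hε]
  exact eLpNorm_mollifierCommutator_le (contDiff_rescale hφ ε)
    (hasCompactSupport_rescale hφc hε) hb hbK hg hp

theorem friedrichs_commutator_general [CompleteSpace F] {φ : E → ℝ} (hφ : ContDiff ℝ 1 φ)
    (hφc : HasCompactSupport φ) (μ : Measure E) [μ.IsAddHaarMeasure] (K : ℝ≥0) :
    ∃ C > (0 : ℝ), ∀ b : E → E, ContDiff ℝ 1 b → LipschitzWith K b →
      ∀ ε ≠ (0 : ℝ), ∀ g : E → F, ContDiff ℝ 1 g → ∀ p : ℝ≥0∞, 1 ≤ p →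
        eLpNorm (mollifierCommutator μ (rescale φ ε) b g) p μ ≤
          ENNReal.ofReal C * eLpNorm g p μ := by
  let M : ℝ≥0∞ := K * commutatorConstant μ φ
  have hM : M ≠ ∞ := ENNReal.mul_ne_top ENNReal.coe_ne_top (commutatorConstant_lt_top hφ hφc).ne
  have hMC : M ≤ ENNReal.ofReal (M.toReal + 1) :=
    (ENNReal.le_ofReal_iff_toReal_le hM (by positivity)).2 (by simp)
  exact ⟨M.toReal + 1, by positivity, fun b hb hbK ε hε g hg p hp ↦
    (eLpNorm_mollifierCommutator_rescale_le hφ hφc hb hbK hε hg hp).trans (by gcongr)⟩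

end InnerProductSpace

theorem hasCompactSupport_of_abs_apply_le {ι F : Type*} [Zero F]
    {f : EuclideanSpace ℝ ι → F} {R : ℝ} (hf : ∀ z, f z ≠ 0 → ∀ i, |z i| ≤ R) :
    HasCompactSupport f := by
  let e := EuclideanSpace.equiv ι ℝ
  have hcube : IsCompact (e ⁻¹' Set.univ.pi fun _ ↦ Set.Icc (-R) R) :=
    e.toHomeomorph.isCompact_preimage.2 (isCompact_univ_pi fun _ ↦ isCompact_Icc)
  exact .of_support_subset_isCompact hcube fun z hz i _ ↦ abs_le.1 (hf z hz i)

theorem sum_apply_mul_map_single {ι : Type*} [Fintype ι] [DecidableEq ι]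
    (L : EuclideanSpace ℝ ι →L[ℝ] ℝ) (x : EuclideanSpace ℝ ι) :
    ∑ i, x i * L (EuclideanSpace.single i 1) = L x := by
  conv_rhs => rw [← (EuclideanSpace.basisFun ι ℝ).sum_repr x]
  simp

theorem smoothOp_eq_convolution (φ : E2 → ℝ) (ε : ℝ) (f : E2 → ℝ) :
    smoothOp φ ε f = rescale φ ε ⋆[lsmul ℝ ℝ] f := by
  ext z
  simp [smoothOp, rescale, convolution_def]

/-- Friedrichs-type commutator estimate (the core of Lemma
`lem:mutiplicationsmoothingcommute`, estimate (eq:smoothingvectorfieldcommute)). -/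
theorem friedrichs_commutator (φ : E2 → ℝ)
    (hφ : ContDiff ℝ 1 φ)
    (hφsupp : ∀ z : E2, φ z ≠ 0 → ∀ i, |z i| ≤ 1)
    (hφint : (∫ z : E2, φ z) = 1) :
    ∀ B > (0 : ℝ), ∃ C > (0 : ℝ), ∀ b : E2 → E2,
      ContDiff ℝ 1 b → (∀ z, ‖b z‖ + ‖fderiv ℝ b z‖ ≤ B) →
      ∀ ε ∈ Set.Ioc (0 : ℝ) 1, ∀ g : E2 → ℝ,
        ContDiff ℝ 1 g → HasCompactSupport g →
        eLpNorm (fun z =>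
            smoothOp φ ε (fun y => ∑ d, b y d * fderiv ℝ g y (EuclideanSpace.single d 1)) z -
              ∑ d, b z d * fderiv ℝ (smoothOp φ ε g) z (EuclideanSpace.single d 1))
            2 volume ≤
          ENNReal.ofReal C * eLpNorm g 2 volume := by
  intro B _
  obtain ⟨C, hC, hbound⟩ := friedrichs_commutator_general (F := ℝ) hφ
    (hasCompactSupport_of_abs_apply_le hφsupp) volume B.toNNReal
  refine ⟨C, hC, fun b hb hbB ε hε g hg _ ↦ ?_⟩
  have hbK : LipschitzWith B.toNNReal b :=
    lipschitzWith_of_nnnorm_fderiv_le (hb.differentiable one_ne_zero) fun z ↦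
      NNReal.le_toNNReal_of_coe_le <| by
        simpa using (le_add_of_nonneg_left (norm_nonneg _)).trans (hbB z)
  simp only [sum_apply_mul_map_single, smoothOp_eq_convolution]
  exact hbound b hb hbK ε hε.1.ne' g hg 2 one_le_two
end
end
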